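/- arXiv:2408.17346 — 3 statements merged into one kernel-verified Lean document; each statement's English description precedes it below -/
import Mathlib

section
/- The negative NPN log-likelihood is in general not convex in λ: let J = 2, s = 1, and for real numbers a₁ < b₁ with a₁ = −b₁ (b₁ > 0) and 1 < a₂ < b₂, define ψ(λ) := ∫_{a₁}^{b₁} ∫_{a₂}^{b₂} exp(−½ z₁² − ½ (z₂ + λ z₁)²) dz₂ dz₁. Then ψ′(0) = 0 and ψ″(0) = ∫_{a₁}^{b₁} ∫_{a₂}^{b₂} z₁²·((z₂)² − 1)·exp(−½ z₁² − ½ z₂²) dz₂ dz₁ > 0, so the second derivative of λ ↦ log ψ(λ) at λ = 0 is strictly positive; consequently λ ↦ −log ψ(λ) is not convex on ℝ. -/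
/-!
The integrand `exp (-z₁²/2 - (z₂ + λ z₁)²/2)` is smooth and the box is compact, so `ψ` may be
differentiated twice under the integral sign (`hasDerivAt_integral_of_continuous`, applied to each
of the two integrations). At `λ = 0` the first derivative is the integral of an odd function of
`z₁` over the symmetric interval `[-b₁, b₁]`, hence `0`; the second derivative is the integral of
`z₁² (z₂² - 1) exp (-z₁²/2 - z₂²/2)`, which is positive for `z₁ ≠ 0` because `z₂ > a₂ > 1`.
Since `ψ > 0`, `(log ψ)″ = (ψ″ ψ - ψ′²) / ψ²` reduces at `0` to `ψ″(0) / ψ(0) > 0`.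
If `-log ψ` were convex, its derivative would be monotone, and so `(-log ψ)″(0) ≥ 0`
(`ConvexOn.deriv_deriv_nonneg`), a contradiction.
-/

/-- Differentiation under the integral sign over a compact interval, for jointly continuous
integrand and partial derivative: the dominating constant is the maximum of `F'` on a compact
rectangle. -/
theorem hasDerivAt_integral_of_continuous {F F' : ℝ → ℝ → ℝ} (a b : ℝ)
    (hF : Continuous F.uncurry) (hF' : Continuous F'.uncurry)
    (h : ∀ x t, HasDerivAt (fun x => F x t) (F' x t) x) (x₀ : ℝ) :
    HasDerivAt (fun x => ∫ t in a..b, F x t) (∫ t in a..b, F' x₀ t) x₀ := by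
  have hFx : ∀ x, Continuous (F x) := fun x => hF.comp (by fun_prop : Continuous fun t => (x, t))
  have hFx' : Continuous (F' x₀) := hF'.comp (by fun_prop : Continuous fun t => (x₀, t))
  obtain ⟨C, hC⟩ := ((isCompact_closedBall x₀ (1 : ℝ)).prod
    (isCompact_uIcc (a := a) (b := b))).exists_bound_of_continuousOn hF'.continuousOn
  refine (intervalIntegral.hasDerivAt_integral_of_dominated_loc_of_deriv_le
    (bound := fun _ => C) (Metric.closedBall_mem_nhds x₀ one_pos)
    (Filter.Eventually.of_forall fun x => (hFx x).aestronglyMeasurable)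
    ((hFx x₀).intervalIntegrable _ _) hFx'.aestronglyMeasurable
    (Filter.Eventually.of_forall fun t ht x hx => ?_)
    intervalIntegrable_const
    (Filter.Eventually.of_forall fun t _ x _ => h x t)).2
  exact hC (x, t) ⟨hx, Set.uIoc_subset_uIcc ht⟩

/-- Twofold version of `hasDerivAt_integral_of_continuous`, for iterated integrals. -/
theorem hasDerivAt_integral_integral_of_continuous {F F' : ℝ → ℝ → ℝ → ℝ} (a b c d : ℝ)
    (hF : Continuous fun p : (ℝ × ℝ) × ℝ => F p.1.1 p.1.2 p.2)
    (hF' : Continuous fun p : (ℝ × ℝ) × ℝ => F' p.1.1 p.1.2 p.2)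
    (h : ∀ x s t, HasDerivAt (fun x => F x s t) (F' x s t) x) (x₀ : ℝ) :
    HasDerivAt (fun x => ∫ s in a..b, ∫ t in c..d, F x s t)
      (∫ s in a..b, ∫ t in c..d, F' x₀ s t) x₀ := by
  have key : ∀ G : ℝ → ℝ → ℝ → ℝ, (Continuous fun p : (ℝ × ℝ) × ℝ => G p.1.1 p.1.2 p.2) →
      Continuous (Function.uncurry fun x s => ∫ t in c..d, G x s t) := fun G hG =>
    intervalIntegral.continuous_parametric_intervalIntegral_of_continuous'
      (f := fun (p : ℝ × ℝ) t => G p.1 p.2 t) hG c d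
  refine hasDerivAt_integral_of_continuous (F := fun x s => ∫ t in c..d, F x s t)
    (F' := fun x s => ∫ t in c..d, F' x s t) a b (key F hF) (key F' hF') (fun x s => ?_) x₀
  exact hasDerivAt_integral_of_continuous (F := fun x t => F x s t) (F' := fun x t => F' x s t) c d
    (hF.comp (by fun_prop : Continuous fun q : ℝ × ℝ => ((q.1, s), q.2)))
    (hF'.comp (by fun_prop : Continuous fun q : ℝ × ℝ => ((q.1, s), q.2)))
    (fun x t => h x s t) x

/-- The derivative of a differentiable convex function is monotone, so its own derivative is
nonnegative. -/
theorem ConvexOn.deriv_deriv_nonneg {f : ℝ → ℝ} (hf : ConvexOn ℝ Set.univ f)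
    (hd : Differentiable ℝ f) (x : ℝ) : 0 ≤ deriv (deriv f) x := by
  have hm := hf.monotoneOn_deriv fun x _ => hd x
  rw [← derivWithin_univ]
  exact hm.derivWithin_nonneg

/-- The integral of a function that is odd over an interval symmetric about `0` vanishes. -/
theorem integral_eq_zero_of_odd {f : ℝ → ℝ} (b : ℝ) (hf : ∀ x, f (-x) = -f x) :
    ∫ x in (-b)..b, f x = 0 := by
  have h := intervalIntegral.integral_comp_neg (a := -b) (b := b) f
  simp only [hf, intervalIntegral.integral_neg, neg_neg] at h
  linarith


open Matrix MeasureTheory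

noncomputable section

/-- Index set for the strictly lower triangular entries: pairs (i, j) with j < i,
of cardinality J(J-1)/2. -/
def LowIdx (J : ℕ) := {p : Fin J × Fin J // p.2 < p.1}

/-- `Λ(λ)`: the J×J lower triangular matrix with unit diagonal whose strictly lower
triangular entries are the components of `lam`. -/
def unitri {J : ℕ} (lam : LowIdx J → ℝ) : Matrix (Fin J) (Fin J) ℝ :=
  Matrix.of fun i j => if h : j < i then lam ⟨(i, j), h⟩ else if i = j then 1 else 0

/-- `Ω⁽²⁾(λ) = Λ(λ)·diag(Λ(λ)⁻¹Λ(λ)⁻ᵀ)^{1/2}`. -/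
def Omega2 {J : ℕ} (lam : LowIdx J → ℝ) : Matrix (Fin J) (Fin J) ℝ :=
  unitri lam * Matrix.diagonal fun j => Real.sqrt (((unitri lam)⁻¹ * (unitri lam)⁻¹ᵀ) j j)

/-- `φ(z ∣ Ω)`: the density of `N(0, Ω⁻¹Ω⁻ᵀ)` expressed via the inverse Cholesky
factor `Ω` (lower triangular with positive diagonal). -/
def npnPdf {ι : Type*} [Fintype ι] (Ω : Matrix ι ι ℝ) (z : ι → ℝ) : ℝ :=
  Real.exp (-((Fintype.card ι : ℝ) / 2) * Real.log (2 * Real.pi)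
    + ∑ j, Real.log (Ω j j) - 1 / 2 * ∑ j, Ω.mulVec z j ^ 2)

/-- `Φ`: the standard normal cumulative distribution function. -/
def stdPhi (x : ℝ) : ℝ := ∫ t in Set.Iic x, Real.exp (-t ^ 2 / 2) / Real.sqrt (2 * Real.pi)

/-- `Φ` extended to `[-∞, +∞]` with `Φ(−∞) = 0` and `Φ(+∞) = 1`. -/
def stdPhiE (x : EReal) : ℝ :=
  if x = ⊥ then 0 else if x = ⊤ then 1 else stdPhi x.toReal

/-- Extended cutoffs: `θ_{j,0} = −∞`, `θ_{j,K} = +∞`, and the coordinates of `θ`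
in between. -/
def cutE {K : ℕ} (θ : Fin (K - 1) → ℝ) (k : Fin (K + 1)) : EReal :=
  if h0 : (k : ℕ) = 0 then ⊥
  else if hK : K ≤ (k : ℕ) then ⊤
  else ((θ ⟨(k : ℕ) - 1, by omega⟩ : ℝ) : EReal)

/-- Non-convexity of the negative NPN log-likelihood in `λ`: for
`J = 2`, `s = 1`, `a₁ = −b₁ < 0 < b₁` and `1 < a₂ < b₂`, the function
`ψ(λ) = ∫_{a₁}^{b₁}∫_{a₂}^{b₂} exp(−½z₁² − ½(z₂ + λz₁)²) dz₂ dz₁` satisfies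
`ψ′(0) = 0`, `ψ″(0) = ∫∫ z₁²(z₂² − 1)·exp(−½z₁² − ½z₂²) dz₂ dz₁ > 0`, the second
derivative of `log ψ` at `0` is strictly positive, and `λ ↦ −log ψ(λ)` is not
convex on `ℝ`. -/
theorem neg_npn_loglik_not_convex_in_lambda
    (a₁ b₁ a₂ b₂ : ℝ) (hb₁ : 0 < b₁) (ha₁ : a₁ = -b₁) (ha₂ : 1 < a₂) (hab : a₂ < b₂)
    (ψ : ℝ → ℝ)
    (hψ : ψ = fun lam => ∫ z₁ in a₁..b₁, ∫ z₂ in a₂..b₂,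
      Real.exp (-(1 / 2) * z₁ ^ 2 - 1 / 2 * (z₂ + lam * z₁) ^ 2)) :
    deriv ψ 0 = 0 ∧
    deriv (deriv ψ) 0
      = (∫ z₁ in a₁..b₁, ∫ z₂ in a₂..b₂,
          z₁ ^ 2 * (z₂ ^ 2 - 1) * Real.exp (-(1 / 2) * z₁ ^ 2 - 1 / 2 * z₂ ^ 2)) ∧
    0 < deriv (deriv ψ) 0 ∧
    0 < deriv (deriv fun lam => Real.log (ψ lam)) 0 ∧
    ¬ ConvexOn ℝ Set.univ (fun lam => -Real.log (ψ lam)) := by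
  have h1 : ∀ x, HasDerivAt ψ (∫ z₁ in a₁..b₁, ∫ z₂ in a₂..b₂, -(z₁ * (z₂ + x * z₁)) *
      Real.exp (-(1 / 2) * z₁ ^ 2 - 1 / 2 * (z₂ + x * z₁) ^ 2)) x := by
    intro x
    rw [hψ]
    refine hasDerivAt_integral_integral_of_continuous
      (F' := fun x z₁ z₂ => -(z₁ * (z₂ + x * z₁)) *
        Real.exp (-(1 / 2) * z₁ ^ 2 - 1 / 2 * (z₂ + x * z₁) ^ 2))
      a₁ b₁ a₂ b₂ (by fun_prop) (by fun_prop) (fun x s t => ?_) x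
    have h := ((((((hasDerivAt_id x).mul_const s).const_add t).pow 2).const_mul
      (1 / 2)).const_sub (-(1 / 2) * s ^ 2)).exp
    refine h.congr_deriv ?_
    simp only [id, Pi.pow_apply]
    ring
  have hd1 : deriv ψ = fun x => ∫ z₁ in a₁..b₁, ∫ z₂ in a₂..b₂, -(z₁ * (z₂ + x * z₁)) *
      Real.exp (-(1 / 2) * z₁ ^ 2 - 1 / 2 * (z₂ + x * z₁) ^ 2) := funext fun x => (h1 x).deriv
  have h2 : ∀ x, HasDerivAt (deriv ψ) (∫ z₁ in a₁..b₁, ∫ z₂ in a₂..b₂,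
      z₁ ^ 2 * ((z₂ + x * z₁) ^ 2 - 1) *
        Real.exp (-(1 / 2) * z₁ ^ 2 - 1 / 2 * (z₂ + x * z₁) ^ 2)) x := by
    intro x
    rw [hd1]
    refine hasDerivAt_integral_integral_of_continuous
      (F' := fun x z₁ z₂ => z₁ ^ 2 * ((z₂ + x * z₁) ^ 2 - 1) *
        Real.exp (-(1 / 2) * z₁ ^ 2 - 1 / 2 * (z₂ + x * z₁) ^ 2))
      a₁ b₁ a₂ b₂ (by fun_prop) (by fun_prop) (fun x s t => ?_) x
    have hl := ((hasDerivAt_id x).mul_const s).const_add t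
    have h := (hl.const_mul s).neg.mul
      (((hl.pow 2).const_mul (1 / 2)).const_sub (-(1 / 2) * s ^ 2)).exp
    refine h.congr_deriv ?_
    simp only [id, Pi.neg_apply, Pi.pow_apply]
    ring
  have hab1 : a₁ < b₁ := by linarith
  have hpos : ∀ x, 0 < ψ x := by
    intro x
    simp only [hψ]
    refine intervalIntegral.intervalIntegral_pos_of_pos ?_ (fun z₁ => ?_) hab1
    · exact (intervalIntegral.continuous_parametric_intervalIntegral_of_continuous'
        (by simp only [Function.uncurry_def]; fun_prop) _ _).intervalIntegrable _ _
    · exact intervalIntegral.intervalIntegral_pos_of_pos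
        ((by fun_prop : Continuous _).intervalIntegrable _ _) (fun z₂ => Real.exp_pos _) hab
  have hz : deriv ψ 0 = 0 := by
    rw [hd1, ha₁]
    refine integral_eq_zero_of_odd b₁ fun z₁ => ?_
    rw [← intervalIntegral.integral_neg]
    refine intervalIntegral.integral_congr fun z₂ _ => ?_
    simp
  have hdd : deriv (deriv ψ) 0 = ∫ z₁ in a₁..b₁, ∫ z₂ in a₂..b₂,
      z₁ ^ 2 * (z₂ ^ 2 - 1) * Real.exp (-(1 / 2) * z₁ ^ 2 - 1 / 2 * z₂ ^ 2) := by
    rw [(h2 0).deriv]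
    simp only [zero_mul, add_zero]
  have hddpos : 0 < deriv (deriv ψ) 0 := by
    rw [hdd]
    have hsq : ∀ z₂, a₂ < z₂ → 0 < z₂ ^ 2 - 1 := fun z₂ h => by nlinarith
    refine intervalIntegral.integral_pos hab1 ?_ (fun z₁ _ => ?_) ⟨b₁, ⟨hab1.le, le_rfl⟩, ?_⟩
    · exact (intervalIntegral.continuous_parametric_intervalIntegral_of_continuous'
        (by simp only [Function.uncurry_def]; fun_prop) _ _).continuousOn
    · refine intervalIntegral.integral_nonneg hab.le fun z₂ hz₂ => ?_
      have : 0 ≤ z₂ ^ 2 - 1 := by nlinarith [hz₂.1]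
      positivity
    · refine intervalIntegral.intervalIntegral_pos_of_pos_on
        ((by fun_prop : Continuous _).intervalIntegrable _ _) (fun z₂ hz₂ => ?_) hab
      have := hsq z₂ hz₂.1
      positivity
  have hlog : ∀ x, HasDerivAt (fun lam => Real.log (ψ lam)) (deriv ψ x / ψ x) x := fun x =>
    ((h1 x).differentiableAt.hasDerivAt).log (hpos x).ne'
  have hlogpos : 0 < deriv (deriv fun lam => Real.log (ψ lam)) 0 := by
    rw [show (deriv fun lam => Real.log (ψ lam)) = fun x => deriv ψ x / ψ x from
      funext fun x => (hlog x).deriv]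
    have h := (h2 0).differentiableAt.hasDerivAt.div
      (h1 0).differentiableAt.hasDerivAt (hpos 0).ne'
    have h' : deriv (fun x => deriv ψ x / ψ x) 0 = _ := h.deriv
    rw [h', hz]
    have := hpos 0
    simp only [zero_mul, sub_zero]
    positivity
  refine ⟨hz, hdd, hddpos, hlogpos, fun hc => ?_⟩
  have h := hc.deriv_deriv_nonneg (fun x => (hlog x).differentiableAt.neg) 0
  have hneg : (deriv fun lam => -Real.log (ψ lam)) = fun x => -deriv (fun l => Real.log (ψ l)) x :=
    funext fun x => deriv.fun_neg
  rw [hneg, deriv.fun_neg] at h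
  linarith
end
end

section
/- Let Ω be a fixed J×J lower triangular matrix with strictly positive diagonal entries. Then the function (a, b) ↦ ∫_{∏_{j=1}^J (a_j, b_j]} φ(z ∣ Ω) dz is log-concave on the convex set {(a, b) ∈ ℝ^J × ℝ^J : a_j ≤ b_j for all j}; that is, box probabilities of the log-concave density φ(· ∣ Ω) are log-concave functions of the box limits. -/
/-! Box probabilities are log-concave by the Prékopa–Leindler inequality, applied to the density
restricted to the three boxes. Its hypothesis holds because `z ↦ log φ(z ∣ Ω)` is a constant minus
a convex quadratic, and because a convex combination of points of two boxes lies in the box with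
the combined limits.

Prékopa–Leindler (`prekopa_leindler`) is proved here by induction on the dimension: by Tonelli, the
inequality for slices is the hypothesis of the one-dimensional inequality for the marginals.
On the line (`prekopa_line`), one truncates and rescales so that both functions have supremum one.
Then each superlevel set of `h` at a height below one contains the convex combination of the
corresponding nonempty superlevel sets of `f` and `g`, so the one-dimensional Brunn–Minkowski
inequality (`volume_add_le_of_add_mem`) and integration over the heights give
`t ∫ f + (1 - t) ∫ g ≤ ∫ h`, and the weighted AM–GM inequality concludes.
-/

open Matrix MeasureTheory

noncomputable section

/-! ### Brunn–Minkowski on the line -/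

/-- The Brunn–Minkowski inequality on the line, with a measurable `C` containing `A + B`
in place of the sumset, which need not be measurable. -/
lemma volume_add_le_of_add_mem {A B C : Set ℝ} (hA : MeasurableSet A) (hB : MeasurableSet B)
    (hA0 : A.Nonempty) (hB0 : B.Nonempty) (hC : ∀ x ∈ A, ∀ y ∈ B, x + y ∈ C) :
    volume A + volume B ≤ volume C := by
  obtain ⟨a, ha⟩ := hA0
  obtain ⟨b, hb⟩ := hB0
  have key : ∀ K ⊆ A, ∀ L ⊆ B, IsCompact K → IsCompact L → K.Nonempty → L.Nonempty →
      volume K + volume L ≤ volume C := by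
    intro K hKA L hLB hK hL hK0 hL0
    obtain ⟨m, hm⟩ := hK.exists_isGreatest hK0
    obtain ⟨l, hl⟩ := hL.exists_isLeast hL0
    -- The translates `K + min L` and `max K + L` meet at most in the point `max K + min L`.
    have h1 : volume ((fun x => x + (-l)) ⁻¹' K) = volume K :=
      measure_preimage_add_right volume _ K
    have h2 : volume ((fun x => x + (-m)) ⁻¹' L) = volume L :=
      measure_preimage_add_right volume _ L
    have hd : AEDisjoint volume ((fun x => x + (-l)) ⁻¹' K) ((fun x => x + (-m)) ⁻¹' L) := by
      refine measure_mono_null (t := {m + l}) ?_ (by simp)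
      rintro x ⟨hx1, hx2⟩
      have e1 := hm.2 hx1
      have e2 := hl.2 hx2
      simp only [Set.mem_singleton_iff] at *
      linarith
    have hmeas : MeasurableSet ((fun x => x + (-m)) ⁻¹' L) :=
      hL.measurableSet.preimage (measurable_id.add_const _)
    rw [← h1, ← h2, ← measure_union₀ hmeas.nullMeasurableSet hd]
    apply measure_mono
    rintro x (hx | hx)
    · have := hC _ (hKA hx) _ (hLB hl.1)
      simpa using this
    · have := hC _ (hKA hm.1) _ (hLB hx)
      simpa using this
  have translate : ∀ (c : ℝ) (S : Set ℝ), (∀ y ∈ S, c + y ∈ C) → volume S ≤ volume C := by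
    intro c S hS
    rw [← measure_preimage_add volume (-c) S]
    apply measure_mono
    intro x hx
    simpa using hS _ hx
  by_cases hA1 : volume A = 0
  · rw [hA1, zero_add]
    exact translate a B (hC a ha)
  by_cases hB1 : volume B = 0
  · rw [hB1, add_zero]
    exact translate b A fun y hy => add_comm y b ▸ hC y hy b hb
  refine le_of_forall_lt_imp_le_of_dense fun u hu => ?_
  obtain ⟨r, hr, s, hs, hrs⟩ := ENNReal.exists_lt_add_of_lt_add hu hA1 hB1
  refine hrs.le.trans ?_
  obtain ⟨K, hKA, hK, hrK⟩ := hA.exists_lt_isCompact hr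
  obtain ⟨L, hLB, hL, hsL⟩ := hB.exists_lt_isCompact hs
  refine le_trans (add_le_add hrK.le hsL.le) (key K hKA L hLB hK hL ?_ ?_)
  · exact nonempty_of_measure_ne_zero (ne_bot_of_gt hrK)
  · exact nonempty_of_measure_ne_zero (ne_bot_of_gt hsL)

lemma volume_combo_le {A B C : Set ℝ} (hA : MeasurableSet A) (hB : MeasurableSet B)
    (hA0 : A.Nonempty) (hB0 : B.Nonempty) {t : ℝ} (ht0 : 0 < t) (ht1 : t < 1)
    (hC : ∀ x ∈ A, ∀ y ∈ B, t * x + (1 - t) * y ∈ C) :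
    ENNReal.ofReal t * volume A + ENNReal.ofReal (1 - t) * volume B ≤ volume C := by
  have ht1' : 0 < 1 - t := by linarith
  have scale : ∀ {c : ℝ}, 0 < c → ∀ S : Set ℝ,
      volume ((fun x => c⁻¹ * x) ⁻¹' S) = ENNReal.ofReal c * volume S := by
    intro c hc S
    rw [Real.volume_preimage_mul_left (inv_ne_zero hc.ne'), inv_inv, abs_of_pos hc]
  rw [← scale ht0, ← scale ht1']
  apply volume_add_le_of_add_mem
  · exact hA.preimage (measurable_id.const_mul _)
  · exact hB.preimage (measurable_id.const_mul _)
  · obtain ⟨a, ha⟩ := hA0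
    exact ⟨t * a, by simpa [ht0.ne'] using ha⟩
  · obtain ⟨b, hb⟩ := hB0
    exact ⟨(1 - t) * b, by simpa [ht1'.ne'] using hb⟩
  · intro x hx y hy
    have := hC _ hx _ hy
    rwa [mul_inv_cancel_left₀ ht0.ne', mul_inv_cancel_left₀ ht1'.ne'] at this

/-! ### Prékopa–Leindler on the line -/

lemma ennreal_geom_le_arith {t : ℝ} (ht0 : 0 < t) (ht1 : t < 1) (a b : ENNReal) :
    a ^ t * b ^ (1 - t) ≤ ENNReal.ofReal t * a + ENNReal.ofReal (1 - t) * b := by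
  have ht1' : 0 < 1 - t := by linarith
  by_cases ha : a = ⊤
  · subst ha
    rw [ENNReal.mul_top (by simpa using ht0)]
    simp
  by_cases hb : b = ⊤
  · subst hb
    rw [ENNReal.mul_top (by simpa using ht1)]
    simp
  lift a to NNReal using ha
  lift b to NNReal using hb
  have := NNReal.geom_mean_le_arith_mean2_weighted t.toNNReal (1 - t).toNNReal a b
    (by rw [← Real.toNNReal_add ht0.le ht1'.le]; simp)
  rw [Real.coe_toNNReal _ ht0.le, Real.coe_toNNReal _ ht1'.le] at this
  rw [← ENNReal.coe_rpow_of_nonneg _ ht0.le, ← ENNReal.coe_rpow_of_nonneg _ ht1'.le]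
  simp only [ENNReal.ofReal]
  exact_mod_cast this

/-- The layer-cake formula for `ENNReal`-valued functions bounded by one. -/
lemma lintegral_eq_layer {f : ℝ → ENNReal} (hf : Measurable f) (hf1 : ∀ x, f x ≤ 1) :
    ∫⁻ x, f x = ∫⁻ s in Set.Ioi (0 : ℝ), volume {x | ENNReal.ofReal s < f x} := by
  have hfin : ∀ x, f x ≠ ⊤ := fun x => ne_top_of_le_ne_top ENNReal.one_ne_top (hf1 x)
  have := lintegral_eq_lintegral_meas_lt (f := fun x => (f x).toReal) volume
    (Filter.Eventually.of_forall fun x => ENNReal.toReal_nonneg) hf.ennreal_toReal.aemeasurable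
  simp only [ENNReal.ofReal_toReal (hfin _)] at this
  rw [this]
  refine setLIntegral_congr_fun measurableSet_Ioi ?_
  intro s hs
  simp only [ENNReal.ofReal_lt_iff_lt_toReal (le_of_lt hs) (hfin _)]

/-- Prékopa–Leindler on the line for functions of supremum one. The normalisation makes all
superlevel sets at heights below one nonempty, so Brunn–Minkowski applies to each of them; it
gives the stronger arithmetic-mean bound. -/
lemma prekopa_line_normalized {t : ℝ} (ht0 : 0 < t) (ht1 : t < 1) {f g h : ℝ → ENNReal}
    (hf : Measurable f) (hg : Measurable g) (hh : Measurable h)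
    (hf1 : ⨆ x, f x = 1) (hg1 : ⨆ x, g x = 1)
    (H : ∀ x y, f x ^ t * g y ^ (1 - t) ≤ h (t * x + (1 - t) * y)) :
    ENNReal.ofReal t * (∫⁻ x, f x) + ENNReal.ofReal (1 - t) * (∫⁻ x, g x) ≤ ∫⁻ x, h x := by
  have ht1' : 0 < 1 - t := by linarith
  have hmin : ∫⁻ x, min (h x) 1 ≤ ∫⁻ x, h x := lintegral_mono fun x => min_le_left _ _
  refine le_trans ?_ hmin
  have hfle : ∀ x, f x ≤ 1 := fun x => hf1 ▸ le_iSup f x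
  have hgle : ∀ x, g x ≤ 1 := fun x => hg1 ▸ le_iSup g x
  rw [lintegral_eq_layer hf hfle, lintegral_eq_layer hg hgle,
    lintegral_eq_layer (hh.min measurable_const) (fun x => min_le_right _ _),
    ← lintegral_const_mul' _ _ ENNReal.ofReal_ne_top,
    ← lintegral_const_mul' _ _ ENNReal.ofReal_ne_top]
  have hanti : Antitone fun s : ℝ => ENNReal.ofReal t * volume {x | ENNReal.ofReal s < f x} := by
    intro s s' hss
    dsimp only
    gcongr
  rw [← lintegral_add_left hanti.measurable]
  refine setLIntegral_mono' measurableSet_Ioi ?_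
  intro s hs
  by_cases hs1 : ENNReal.ofReal s < 1
  · apply volume_combo_le (measurableSet_lt measurable_const hf)
      (measurableSet_lt measurable_const hg) _ _ ht0 ht1
    · intro x hx y hy
      simp only [Set.mem_ofPred_eq, lt_min_iff] at hx hy ⊢
      refine ⟨lt_of_lt_of_le ?_ (H x y), hs1⟩
      have hs0 : ENNReal.ofReal s ≠ 0 := by simpa using hs
      calc ENNReal.ofReal s = ENNReal.ofReal s ^ t * ENNReal.ofReal s ^ (1 - t) := by
            rw [← ENNReal.rpow_add _ _ hs0 ENNReal.ofReal_ne_top]; simp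
        _ < f x ^ t * g y ^ (1 - t) :=
            ENNReal.mul_lt_mul (ENNReal.rpow_lt_rpow hx ht0) (ENNReal.rpow_lt_rpow hy ht1')
    · exact lt_iSup_iff.1 (hf1 ▸ hs1)
    · exact lt_iSup_iff.1 (hg1 ▸ hs1)
  · have e1 : {x | ENNReal.ofReal s < f x} = ∅ := by
      ext x; simpa using (hfle x).trans (not_lt.1 hs1)
    have e2 : {x | ENNReal.ofReal s < g x} = ∅ := by
      ext x; simpa using (hgle x).trans (not_lt.1 hs1)
    simp [e1, e2]

/-- Prékopa–Leindler on the line for bounded functions, by dividing `f` and `g` by their suprema;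
if one supremum is zero, the left-hand side vanishes. -/
lemma prekopa_line_bounded {t : ℝ} (ht0 : 0 < t) (ht1 : t < 1) {f g h : ℝ → ENNReal}
    (hf : Measurable f) (hg : Measurable g) (hh : Measurable h)
    (hf1 : ⨆ x, f x ≠ ⊤) (hg1 : ⨆ x, g x ≠ ⊤)
    (H : ∀ x y, f x ^ t * g y ^ (1 - t) ≤ h (t * x + (1 - t) * y)) :
    (∫⁻ x, f x) ^ t * (∫⁻ x, g x) ^ (1 - t) ≤ ∫⁻ x, h x := by
  have ht1' : 0 < 1 - t := by linarith
  set F := ⨆ x, f x with hF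
  set G := ⨆ x, g x with hG
  by_cases hF0 : F = 0
  · have : ∀ x, f x = 0 := by simpa [hF] using hF0
    simp [this, ht0]
  by_cases hG0 : G = 0
  · have : ∀ x, g x = 0 := by simpa [hG] using hG0
    simp [this, ht1]
  have hFt0 : F ^ t ≠ 0 := by simp [hF0, hf1]
  have hFtT : F ^ t ≠ ⊤ := ENNReal.rpow_ne_top_of_nonneg ht0.le hf1
  have hGt0 : G ^ (1 - t) ≠ 0 := by simp [hG0, hg1]
  have hGtT : G ^ (1 - t) ≠ ⊤ := ENNReal.rpow_ne_top_of_nonneg ht1'.le hg1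
  have hsplit : ∀ a b : ENNReal, (F⁻¹ * a) ^ t * (G⁻¹ * b) ^ (1 - t)
      = (F ^ t * G ^ (1 - t))⁻¹ * (a ^ t * b ^ (1 - t)) := by
    intro a b
    rw [ENNReal.mul_rpow_of_nonneg _ _ ht0.le, ENNReal.mul_rpow_of_nonneg _ _ ht1'.le,
      ENNReal.inv_rpow, ENNReal.inv_rpow, ENNReal.mul_inv (Or.inl hFt0) (Or.inl hFtT)]
    ring
  have hc0 : F ^ t * G ^ (1 - t) ≠ 0 := mul_ne_zero hFt0 hGt0
  have hcT : F ^ t * G ^ (1 - t) ≠ ⊤ := ENNReal.mul_ne_top hFtT hGtT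
  have key := prekopa_line_normalized ht0 ht1 (f := fun x => F⁻¹ * f x) (g := fun x => G⁻¹ * g x)
    (h := fun x => (F ^ t * G ^ (1 - t))⁻¹ * h x)
    (hf.const_mul _) (hg.const_mul _) (hh.const_mul _)
    (by rw [← ENNReal.mul_iSup]; exact ENNReal.inv_mul_cancel hF0 hf1)
    (by rw [← ENNReal.mul_iSup]; exact ENNReal.inv_mul_cancel hG0 hg1)
    (by intro x y; rw [hsplit]; gcongr; exact H x y)
  have key2 := (ennreal_geom_le_arith ht0 ht1 _ _).trans key
  rw [lintegral_const_mul _ hf, lintegral_const_mul _ hg, lintegral_const_mul _ hh, hsplit] at key2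
  have := mul_le_mul_right key2 (F ^ t * G ^ (1 - t))
  rwa [ENNReal.mul_inv_cancel_left hc0 hcT, ENNReal.mul_inv_cancel_left hc0 hcT] at this

lemma tendsto_lintegral_min_nat {f : ℝ → ENNReal} (hf : Measurable f) :
    Filter.Tendsto (fun n : ℕ => ∫⁻ x, min (f x) n) Filter.atTop (nhds (∫⁻ x, f x)) := by
  refine lintegral_tendsto_of_tendsto_of_monotone
    (fun n => (hf.min measurable_const).aemeasurable) ?_ ?_
  · refine Filter.Eventually.of_forall fun x n m hnm => ?_
    dsimp only
    gcongr
  · refine Filter.Eventually.of_forall fun x => ?_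
    have := (tendsto_const_nhds (x := f x)).min ENNReal.tendsto_nat_nhds_top
    simpa using this

/-- The Prékopa–Leindler inequality on `ℝ`. Truncating `f` and `g` keeps the hypothesis and reduces
to the bounded case by monotone convergence. -/
lemma prekopa_line {t : ℝ} (ht0 : 0 < t) (ht1 : t < 1) {f g h : ℝ → ENNReal}
    (hf : Measurable f) (hg : Measurable g) (hh : Measurable h)
    (H : ∀ x y, f x ^ t * g y ^ (1 - t) ≤ h (t * x + (1 - t) * y)) :
    (∫⁻ x, f x) ^ t * (∫⁻ x, g x) ^ (1 - t) ≤ ∫⁻ x, h x := by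
  have ht1' : 0 < 1 - t := by linarith
  by_cases hF0 : ∫⁻ x, f x = 0
  · simp [hF0, ht0]
  by_cases hG0 : ∫⁻ x, g x = 0
  · simp [hG0, ht1]
  have h1 := ((ENNReal.continuous_rpow_const (y := t)).tendsto _).comp
    (tendsto_lintegral_min_nat hf)
  have h2 := ((ENNReal.continuous_rpow_const (y := 1 - t)).tendsto _).comp
    (tendsto_lintegral_min_nat hg)
  have h3 := ENNReal.Tendsto.mul h1 (Or.inl (by simp [hF0, ht0.le, ht0])) h2
    (Or.inl (by simp [hG0, ht1.le, ht1]))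
  refine le_of_tendsto' h3 fun n => ?_
  refine prekopa_line_bounded ht0 ht1 (hf.min measurable_const) (hg.min measurable_const) hh
    ?_ ?_ ?_
  · exact ne_top_of_le_ne_top (ENNReal.natCast_ne_top n) (iSup_le fun x => min_le_right _ _)
  · exact ne_top_of_le_ne_top (ENNReal.natCast_ne_top n) (iSup_le fun x => min_le_right _ _)
  · intro x y
    refine le_trans ?_ (H x y)
    gcongr
    · exact min_le_left _ _
    · exact min_le_left _ _

/-! ### Prékopa–Leindler in dimension `n` -/

lemma measurable_fin_cons {n : ℕ} :
    Measurable fun z : ℝ × (Fin n → ℝ) => (Fin.cons z.1 z.2 : Fin (n + 1) → ℝ) := by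
  refine measurable_pi_iff.2 fun i => ?_
  refine Fin.cases ?_ (fun j => ?_) i
  · simpa using measurable_fst
  · exact (measurable_pi_apply j).comp measurable_snd

lemma lintegral_fin_succ {n : ℕ} {f : (Fin (n + 1) → ℝ) → ENNReal} (hf : Measurable f) :
    ∫⁻ z, f z = ∫⁻ x : ℝ, ∫⁻ y : Fin n → ℝ, f (Fin.cons x y) := by
  have h := (volume_preserving_piFinSuccAbove (fun _ : Fin (n + 1) => ℝ) 0).symm
  rw [← h.lintegral_comp hf, Measure.volume_eq_prod,
    lintegral_prod (fun z : ℝ × (Fin n → ℝ) => f ((MeasurableEquiv.piFinSuccAbove _ 0).symm z))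
      (hf.comp (MeasurableEquiv.measurable _)).aemeasurable]
  simp [MeasurableEquiv.piFinSuccAbove_symm_apply, Fin.insertNthEquiv]

/-- The Prékopa–Leindler inequality on `ℝⁿ`. -/
theorem prekopa_leindler {t : ℝ} (ht0 : 0 < t) (ht1 : t < 1) (n : ℕ) :
    ∀ {f g h : (Fin n → ℝ) → ENNReal}, Measurable f → Measurable g → Measurable h →
    (∀ x y, f x ^ t * g y ^ (1 - t) ≤ h (t • x + (1 - t) • y)) →
    (∫⁻ x, f x) ^ t * (∫⁻ x, g x) ^ (1 - t) ≤ ∫⁻ x, h x := by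
  induction n with
  | zero =>
    intro f g h _ _ _ H
    have := H default default
    rw [Subsingleton.elim (t • (default : Fin 0 → ℝ) + (1 - t) • default) default] at this
    rw [lintegral_unique, lintegral_unique, lintegral_unique]
    simp only [volume_pi, Measure.pi_empty_univ, mul_one]
    convert this
  | succ n ih =>
    intro f g h hf hg hh H
    rw [lintegral_fin_succ hf, lintegral_fin_succ hg, lintegral_fin_succ hh]
    refine prekopa_line ht0 ht1 (hf.comp measurable_fin_cons).lintegral_prod_right'
      (hg.comp measurable_fin_cons).lintegral_prod_right'
      (hh.comp measurable_fin_cons).lintegral_prod_right' ?_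
    intro x y
    have hm : ∀ c : ℝ, Measurable fun v : Fin n → ℝ => (Fin.cons c v : Fin (n + 1) → ℝ) :=
      fun c => measurable_fin_cons.comp measurable_prodMk_left
    refine ih (hf.comp (hm x)) (hg.comp (hm y)) (hh.comp (hm _)) ?_
    intro v w
    refine (H _ _).trans (le_of_eq ?_)
    congr 1
    ext i
    refine Fin.cases ?_ (fun j => ?_) i <;> simp

/-! ### The normal density and its box integrals -/

lemma continuous_npnPdf {J : ℕ} (Ω : Matrix (Fin J) (Fin J) ℝ) :
    Continuous fun z : Fin J → ℝ => npnPdf Ω z := by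
  unfold npnPdf Matrix.mulVec dotProduct
  fun_prop

lemma npnPdf_logconcave {J : ℕ} (Ω : Matrix (Fin J) (Fin J) ℝ) {t : ℝ} (ht0 : 0 ≤ t) (ht1 : t ≤ 1)
    (x y : Fin J → ℝ) :
    npnPdf Ω x ^ t * npnPdf Ω y ^ (1 - t) ≤ npnPdf Ω (t • x + (1 - t) • y) := by
  unfold npnPdf
  rw [← Real.exp_mul, ← Real.exp_mul, ← Real.exp_add]
  apply Real.exp_le_exp.2
  have hsq : ∑ j, Ω.mulVec (t • x + (1 - t) • y) j ^ 2
      ≤ t * ∑ j, Ω.mulVec x j ^ 2 + (1 - t) * ∑ j, Ω.mulVec y j ^ 2 := by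
    rw [Finset.mul_sum, Finset.mul_sum, ← Finset.sum_add_distrib]
    refine Finset.sum_le_sum fun j _ => ?_
    rw [Matrix.mulVec_add, Matrix.mulVec_smul, Matrix.mulVec_smul]
    simp only [Pi.add_apply, Pi.smul_apply, smul_eq_mul]
    nlinarith [mul_nonneg (mul_nonneg ht0 (sub_nonneg.2 ht1))
      (sq_nonneg (Ω.mulVec x j - Ω.mulVec y j))]
  linarith

lemma npnPdf_integral_box {J : ℕ} (Ω : Matrix (Fin J) (Fin J) ℝ) (a b : Fin J → ℝ) :
    ∫ z in Set.univ.pi fun j => Set.Ioc (a j) (b j), npnPdf Ω z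
      = (∫⁻ z, (Set.univ.pi fun j => Set.Ioc (a j) (b j)).indicator
          (fun z => ENNReal.ofReal (npnPdf Ω z)) z).toReal := by
  rw [lintegral_indicator (MeasurableSet.univ_pi fun j => measurableSet_Ioc),
    integral_eq_lintegral_of_nonneg_ae (f := fun z => npnPdf Ω z)
      (Filter.Eventually.of_forall fun z => (Real.exp_pos _).le)
      (continuous_npnPdf Ω).aestronglyMeasurable]

lemma npnPdf_lintegral_box_ne_top {J : ℕ} (Ω : Matrix (Fin J) (Fin J) ℝ) (a b : Fin J → ℝ) :
    ∫⁻ z, (Set.univ.pi fun j => Set.Ioc (a j) (b j)).indicator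
          (fun z => ENNReal.ofReal (npnPdf Ω z)) z ≠ ⊤ := by
  rw [lintegral_indicator (MeasurableSet.univ_pi fun j => measurableSet_Ioc)]
  have hint : IntegrableOn (fun z => npnPdf Ω z) (Set.univ.pi fun j => Set.Ioc (a j) (b j)) := by
    refine ((continuous_npnPdf Ω).continuousOn.integrableOn_compact
      (isCompact_univ_pi fun j => isCompact_Icc (a := a j) (b := b j))).mono_set ?_
    exact Set.pi_mono fun j _ => Set.Ioc_subset_Icc_self
  exact hint.lintegral_lt_top.ne

/-- Box probabilities of the log-concave density `φ(· ∣ Ω)` are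
log-concave functions of the pair of box limits `(a, b)` on the convex set
`{(a,b) : a_j ≤ b_j ∀ j}`. -/
theorem box_probability_logconcave (J : ℕ) (Ω : Matrix (Fin J) (Fin J) ℝ)
    (hlow : ∀ i j : Fin J, i < j → Ω i j = 0) (hdiag : ∀ j, 0 < Ω j j)
    (p q : (Fin J → ℝ) × (Fin J → ℝ))
    (hp : ∀ j, p.1 j ≤ p.2 j) (hq : ∀ j, q.1 j ≤ q.2 j)
    (t : ℝ) (ht0 : 0 ≤ t) (ht1 : t ≤ 1) :
    (∫ z in Set.univ.pi fun j => Set.Ioc (p.1 j) (p.2 j), npnPdf Ω z) ^ t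
      * (∫ z in Set.univ.pi fun j => Set.Ioc (q.1 j) (q.2 j), npnPdf Ω z) ^ (1 - t)
    ≤ ∫ z in Set.univ.pi fun j =>
          Set.Ioc ((t • p + (1 - t) • q).1 j) ((t • p + (1 - t) • q).2 j),
        npnPdf Ω z := by
  rcases ht0.eq_or_lt with rfl | ht0
  · simp
  rcases ht1.eq_or_lt with rfl | ht1
  · simp
  have ht1' : 0 < 1 - t := by linarith
  rw [npnPdf_integral_box, npnPdf_integral_box, npnPdf_integral_box, ENNReal.toReal_rpow,
    ENNReal.toReal_rpow, ← ENNReal.toReal_mul]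
  refine ENNReal.toReal_mono (npnPdf_lintegral_box_ne_top _ _ _) ?_
  have hmeas : ∀ a b : Fin J → ℝ, Measurable ((Set.univ.pi fun j => Set.Ioc (a j) (b j)).indicator
      fun z => ENNReal.ofReal (npnPdf Ω z)) := fun a b =>
    (continuous_npnPdf Ω).measurable.ennreal_ofReal.indicator
      (MeasurableSet.univ_pi fun j => measurableSet_Ioc)
  refine prekopa_leindler ht0 ht1 J (hmeas _ _) (hmeas _ _) (hmeas _ _) ?_
  intro x y
  by_cases hx : x ∈ Set.univ.pi fun j => Set.Ioc (p.1 j) (p.2 j)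
  swap
  · simp [Set.indicator_of_notMem hx, ht0]
  by_cases hy : y ∈ Set.univ.pi fun j => Set.Ioc (q.1 j) (q.2 j)
  swap
  · simp [Set.indicator_of_notMem hy, ht1]
  have hxy : t • x + (1 - t) • y ∈ Set.univ.pi fun j =>
      Set.Ioc ((t • p + (1 - t) • q).1 j) ((t • p + (1 - t) • q).2 j) := by
    intro j _
    have h1 := hx j trivial
    have h2 := hy j trivial
    simp only [Set.mem_Ioc, Prod.fst_add, Prod.snd_add, Prod.smul_fst, Prod.smul_snd,
      Pi.add_apply, Pi.smul_apply, smul_eq_mul] at h1 h2 ⊢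
    constructor
    · exact add_lt_add (mul_lt_mul_of_pos_left h1.1 ht0) (mul_lt_mul_of_pos_left h2.1 ht1')
    · exact add_le_add (mul_le_mul_of_nonneg_left h1.2 ht0.le)
        (mul_le_mul_of_nonneg_left h2.2 ht1'.le)
  have hpos : ∀ z : Fin J → ℝ, 0 ≤ npnPdf Ω z := fun z => (Real.exp_pos _).le
  rw [Set.indicator_of_mem hx, Set.indicator_of_mem hy, Set.indicator_of_mem hxy,
    ENNReal.ofReal_rpow_of_nonneg (hpos x) ht0.le, ENNReal.ofReal_rpow_of_nonneg (hpos y) ht1'.le,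
    ← ENNReal.ofReal_mul (Real.rpow_nonneg (hpos x) t)]
  exact ENNReal.ofReal_le_ofReal (npnPdf_logconcave Ω ht0.le ht1.le x y)
end
end

section
/- Let m ≥ 1, v ∈ ℝ^m, and let a < b be extended real numbers. Then the function λ ↦ Φ(b + ⟨λ, v⟩) − Φ(a + ⟨λ, v⟩) is log-concave on ℝ^m, where Φ(+∞) := 1 and Φ(−∞) := 0. -/
/-!
In the scalar shift `s`, put `α = a + s`, `β = b + s`, `G = Φ(β) - Φ(α)` and `N = φ(α) - φ(β)`, with
`φ` the standard normal density. For finite `a < b` the logarithmic derivative of `G` is `-N / G`,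
the negative of the mean of a standard normal variable conditioned on `[α, β]`. That mean lies in
`[α, β]` (`mul_stdPhi_sub_le`, `le_mul_stdPhi_sub`), and therefore increases in both endpoints:
`G G'' - G' ^ 2 = -(φ(β) (β G - N) + φ(α) (N - α G)) ≤ 0`. So `log G` is concave. An infinite
endpoint is the limit of finite ones, and log-concavity survives pointwise limits
(`LogConcaveReal.of_tendsto`). The shift `⟨λ, v⟩` is linear in `λ`, which reduces `ℝ^m` to `ℝ`.
-/

open Matrix MeasureTheory

noncomputable section

open Filter Topology ProbabilityTheory

/-- The standard normal density `φ`. -/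
def stdDens (x : ℝ) : ℝ := Real.exp (-x ^ 2 / 2) / Real.sqrt (2 * Real.pi)

lemma stdDens_pos (x : ℝ) : 0 < stdDens x := by
  unfold stdDens; positivity

lemma stdDens_eq_gaussianPDFReal : stdDens = gaussianPDFReal 0 1 := by
  ext x
  simp [stdDens, gaussianPDFReal, div_eq_inv_mul]

lemma integrable_stdDens : Integrable stdDens := by
  rw [stdDens_eq_gaussianPDFReal]; exact integrable_gaussianPDFReal 0 1

lemma stdPhi_eq_cdf (x : ℝ) : stdPhi x = cdf (gaussianReal 0 1) x := by
  rw [cdf_eq_real, measureReal_def, gaussianReal_apply_eq_integral 0 one_ne_zero,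
    ← stdDens_eq_gaussianPDFReal, ENNReal.toReal_ofReal]
  · rfl
  · exact integral_nonneg fun x => (stdDens_pos x).le

lemma tendsto_stdPhi_atBot : Tendsto stdPhi atBot (𝓝 0) := by
  rw [funext stdPhi_eq_cdf]; exact tendsto_cdf_atBot _

lemma tendsto_stdPhi_atTop : Tendsto stdPhi atTop (𝓝 1) := by
  rw [funext stdPhi_eq_cdf]; exact tendsto_cdf_atTop _

lemma hasDerivAt_stdDens (x : ℝ) : HasDerivAt stdDens (-x * stdDens x) x := by
  have h : HasDerivAt (fun x : ℝ => -x ^ 2 / 2) (-x) x := by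
    refine ((hasDerivAt_pow 2 x).neg.div_const 2).congr_deriv ?_
    push_cast; ring
  refine (h.exp.div_const (Real.sqrt (2 * Real.pi))).congr_deriv ?_
  simp only [stdDens]; ring

lemma hasDerivAt_stdPhi (x : ℝ) : HasDerivAt stdPhi (stdDens x) x := by
  have hcont : Continuous stdDens :=
    continuous_iff_continuousAt.2 fun x => (hasDerivAt_stdDens x).continuousAt
  have h : stdPhi = fun x => stdPhi 0 + ∫ t in (0 : ℝ)..x, stdDens t := by
    ext x
    rw [← intervalIntegral.integral_Iic_sub_Iic integrable_stdDens.integrableOn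
      integrable_stdDens.integrableOn]
    simp [stdPhi, stdDens]
  rw [h]
  exact (intervalIntegral.integral_hasDerivAt_right (hcont.intervalIntegrable _ _)
    (hcont.stronglyMeasurableAtFilter _ _) hcont.continuousAt).const_add _

lemma strictMono_stdPhi : StrictMono stdPhi :=
  strictMono_of_hasDerivAt_pos hasDerivAt_stdPhi stdDens_pos

/-- A standard normal variable conditioned on `[α, β]` has mean at least `α`. -/
lemma mul_stdPhi_sub_le {α β : ℝ} (h : α ≤ β) :
    α * (stdPhi β - stdPhi α) ≤ stdDens α - stdDens β := by
  have hd (x : ℝ) : HasDerivAt (fun x => -stdDens x - α * stdPhi x) ((x - α) * stdDens x) x := by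
    refine ((hasDerivAt_stdDens x).neg.sub ((hasDerivAt_stdPhi x).const_mul α)).congr_deriv ?_
    ring
  have hm := monotoneOn_of_hasDerivWithinAt_nonneg (convex_Ici α)
    (fun x _ => (hd x).continuousAt.continuousWithinAt) (fun x _ => (hd x).hasDerivWithinAt)
    (fun x hx => mul_nonneg (sub_nonneg.2 (Set.mem_Ici.1 (interior_subset hx))) (stdDens_pos x).le)
  have := hm (Set.mem_Ici.2 le_rfl) (Set.mem_Ici.2 h) h
  dsimp only at this
  linarith

/-- A standard normal variable conditioned on `[α, β]` has mean at most `β`. -/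
lemma le_mul_stdPhi_sub {α β : ℝ} (h : α ≤ β) :
    stdDens α - stdDens β ≤ β * (stdPhi β - stdPhi α) := by
  have hd (x : ℝ) : HasDerivAt (fun x => β * stdPhi x + stdDens x) ((β - x) * stdDens x) x := by
    refine (((hasDerivAt_stdPhi x).const_mul β).add (hasDerivAt_stdDens x)).congr_deriv ?_
    ring
  have hm := monotoneOn_of_hasDerivWithinAt_nonneg (convex_Iic β)
    (fun x _ => (hd x).continuousAt.continuousWithinAt) (fun x _ => (hd x).hasDerivWithinAt)
    (fun x hx => mul_nonneg (sub_nonneg.2 (Set.mem_Iic.1 (interior_subset hx))) (stdDens_pos x).le)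
  have := hm (Set.mem_Iic.2 h) (Set.mem_Iic.2 le_rfl) h
  dsimp only at this
  linarith

/-- Log-concavity of `g` on the real line, in multiplicative form; intended for `g ≥ 0`, since a
real power of a negative base has no meaning here. -/
def LogConcaveReal (g : ℝ → ℝ) : Prop :=
  ∀ x y t : ℝ, 0 ≤ t → t ≤ 1 → g x ^ t * g y ^ (1 - t) ≤ g (t * x + (1 - t) * y)

lemma LogConcaveReal.of_concaveOn_log {g : ℝ → ℝ} (hpos : ∀ x, 0 < g x)
    (hg : ConcaveOn ℝ Set.univ fun x => Real.log (g x)) : LogConcaveReal g := by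
  intro x y t h0 h1
  have h := hg.2 (Set.mem_univ x) (Set.mem_univ y) h0 (sub_nonneg.2 h1) (by ring)
  simp only [smul_eq_mul] at h
  rw [Real.rpow_def_of_pos (hpos x), Real.rpow_def_of_pos (hpos y), ← Real.exp_add,
    ← Real.le_log_iff_exp_le (hpos _)]
  linarith

lemma LogConcaveReal.of_tendsto {F : ℝ → ℝ → ℝ} {g : ℝ → ℝ}
    (hF : ∀ᶠ r in atTop, LogConcaveReal (F r))
    (hlim : ∀ x, Tendsto (fun r => F r x) atTop (𝓝 (g x))) : LogConcaveReal g := by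
  intro x y t h0 h1
  exact le_of_tendsto_of_tendsto
    (((hlim x).rpow_const (Or.inr h0)).mul ((hlim y).rpow_const (Or.inr (sub_nonneg.2 h1))))
    (hlim _) (hF.mono fun r hr => hr x y t h0 h1)

lemma logConcaveReal_stdPhi_sub {a b : ℝ} (hab : a < b) :
    LogConcaveReal fun s => stdPhi (b + s) - stdPhi (a + s) := by
  have hG (s : ℝ) : 0 < stdPhi (b + s) - stdPhi (a + s) :=
    sub_pos.2 (strictMono_stdPhi (by linarith))
  have hΦ (c s : ℝ) : HasDerivAt (fun s => stdPhi (c + s)) (stdDens (c + s)) s :=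
    (hasDerivAt_stdPhi (c + s)).comp_const_add c s
  have hφ (c s : ℝ) :
      HasDerivAt (fun s => stdDens (c + s)) (-(c + s) * stdDens (c + s)) s :=
    (hasDerivAt_stdDens (c + s)).comp_const_add c s
  have hd (s : ℝ) := ((hΦ b s).sub (hΦ a s)).log (hG s).ne'
  have hd2 (s : ℝ) := ((hφ b s).sub (hφ a s)).div ((hΦ b s).sub (hΦ a s)) (hG s).ne'
  refine .of_concaveOn_log hG ?_
  refine concaveOn_of_hasDerivWithinAt2_nonpos convex_univ
    (fun s _ => (hd s).continuousAt.continuousWithinAt) (fun s _ => (hd s).hasDerivWithinAt)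
    (fun s _ => (hd2 s).hasDerivWithinAt) fun s _ => ?_
  refine div_nonpos_of_nonpos_of_nonneg ?_ (sq_nonneg _)
  have h1 := mul_stdPhi_sub_le (show a + s ≤ b + s by linarith)
  have h2 := le_mul_stdPhi_sub (show a + s ≤ b + s by linarith)
  simp only [Pi.sub_apply]
  -- the numerator is `-(φ(β) (β G - N) + φ(α) (N - α G))`
  linarith [mul_nonneg (stdDens_pos (b + s)).le (sub_nonneg.2 h2),
    mul_nonneg (stdDens_pos (a + s)).le (sub_nonneg.2 h1)]

@[simp] lemma stdPhiE_bot : stdPhiE ⊥ = 0 := by simp [stdPhiE]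

@[simp] lemma stdPhiE_top : stdPhiE ⊤ = 1 := by simp [stdPhiE]

@[simp] lemma stdPhiE_coe (x : ℝ) : stdPhiE x = stdPhi x := by simp [stdPhiE]

lemma logConcaveReal_stdPhiE_sub {a b : EReal} (hab : a < b) :
    LogConcaveReal fun s => stdPhiE (b + s) - stdPhiE (a + s) := by
  have hbot (s : ℝ) : Tendsto (fun r => stdPhi (-r + s)) atTop (𝓝 0) :=
    tendsto_stdPhi_atBot.comp (tendsto_atBot_add_const_right _ s tendsto_neg_atTop_atBot)
  have htop (s : ℝ) : Tendsto (fun r => stdPhi (r + s)) atTop (𝓝 1) :=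
    tendsto_stdPhi_atTop.comp (tendsto_atTop_add_const_right _ s tendsto_id)
  induction a with
  | top => exact absurd hab not_top_lt
  | bot =>
    induction b with
    | bot => exact absurd hab (lt_irrefl _)
    | top => intro x y t _ _; simp [-EReal.coe_add]
    | coe b =>
      refine .of_tendsto (F := fun r s => stdPhi (b + s) - stdPhi (-r + s)) ?_ fun s => ?_
      · filter_upwards [eventually_gt_atTop (-b)] with r hr
        exact logConcaveReal_stdPhi_sub (by linarith)
      · simpa [← EReal.coe_add] using (hbot s).const_sub (stdPhi (b + s))
  | coe a =>
    induction b with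
    | bot => exact absurd hab not_lt_bot
    | top =>
      refine .of_tendsto (F := fun r s => stdPhi (r + s) - stdPhi (a + s)) ?_ fun s => ?_
      · filter_upwards [eventually_gt_atTop a] with r hr
        exact logConcaveReal_stdPhi_sub hr
      · simpa [← EReal.coe_add] using (htop s).sub_const (stdPhi (a + s))
    | coe b =>
      simpa [← EReal.coe_add] using logConcaveReal_stdPhi_sub (EReal.coe_lt_coe_iff.1 hab)

/-- For `v ∈ ℝ^m` and extended reals `a < b`, the function
`λ ↦ Φ(b + ⟨λ, v⟩) − Φ(a + ⟨λ, v⟩)` is log-concave on `ℝ^m`,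
with `Φ(+∞) = 1` and `Φ(−∞) = 0`. -/
theorem shifted_interval_probability_logconcave (m : ℕ) (hm : 1 ≤ m) (v : Fin m → ℝ)
    (a b : EReal) (hab : a < b)
    (f : (Fin m → ℝ) → ℝ)
    (hf : f = fun lam => stdPhiE (b + ((∑ i, lam i * v i : ℝ) : EReal))
      - stdPhiE (a + ((∑ i, lam i * v i : ℝ) : EReal)))
    (x y : Fin m → ℝ) (t : ℝ) (ht0 : 0 ≤ t) (ht1 : t ≤ 1) :
    f x ^ t * f y ^ (1 - t) ≤ f (t • x + (1 - t) • y) := by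
  have hlin : ∑ i, (t • x + (1 - t) • y) i * v i
      = t * ∑ i, x i * v i + (1 - t) * ∑ i, y i * v i := by
    simp only [Pi.add_apply, Pi.smul_apply, smul_eq_mul, Finset.mul_sum, ← Finset.sum_add_distrib]
    exact Finset.sum_congr rfl fun i _ => by ring
  subst hf
  simp only [hlin]
  exact logConcaveReal_stdPhiE_sub hab _ _ t ht0 ht1
end
end
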